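/- (Classical Vietoris-Rips Lemma.) Let d ≥ 1, let σ be a finite nonempty set of points in ℝ^d, let t > 0, and let 0 < t' ≤ t·(√(2d/(d+1)))^{-1}. If ‖x − y‖ ≤ 2t' for all distinct x, y ∈ σ, then the intersection ⋂_{x ∈ σ} B̄(x, t) of the closed balls of radius t centered at the points of σ is nonempty. -/

import Mathlib

/-!
On weights `w` in the standard simplex, consider `Q(w) = ∑ᵢⱼ wᵢ wⱼ ‖xᵢ - xⱼ‖²`, twice the variance
of the points `xᵢ` under `w`. At a maximizer `w`, the first-order condition in the direction of the
`k`-th vertex says exactly that `xₖ` lies within squared distance `Q(w) / 2` of the barycenter. If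
the pairwise distances are at most `D`, then `Q(w) ≤ D² (1 - ∑ wᵢ²)`, and `∑ wᵢ² ≥ 1 / (n + 1)` for
at most `n + 1` points. By Helly's theorem, `n + 1` points at a time suffice in dimension `n`.
-/

open Module Finset

section FirstOrderCondition

variable {E : Type*} [AddCommGroup E] [Module ℝ E] {B : LinearMap.BilinForm ℝ E}

theorem bilinForm_apply_le_apply_self_of_isMaxOn (hB : B.IsSymm) {s : Set E} (hs : Convex ℝ s)
    {v w : E} (hv : v ∈ s) (hw : w ∈ s) (hmax : IsMaxOn (fun u ↦ B u u) s w) :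
    B w v ≤ B w w := by
  have hsegment : ∀ r ∈ Set.Ioo (0 : ℝ) 1, 2 * B w (v - w) + r * B (v - w) (v - w) ≤ 0 := by
    rintro r ⟨hr₀, hr₁⟩
    have hle : B (w + r • (v - w)) (w + r • (v - w)) ≤ B w w :=
      hmax (hs.add_smul_sub_mem hw hv ⟨hr₀.le, hr₁.le⟩)
    have hexpand : B (w + r • (v - w)) (w + r • (v - w)) =
        B w w + r * (2 * B w (v - w) + r * B (v - w) (v - w)) := by
      simp only [map_add, map_smul, LinearMap.add_apply, LinearMap.smul_apply, smul_eq_mul,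
        hB.eq (v - w) w]
      ring
    exact nonpos_of_mul_nonpos_right (by linarith) hr₀
  have hlimit : Filter.Tendsto (fun r : ℝ ↦ 2 * B w (v - w) + r * B (v - w) (v - w))
      (nhdsWithin 0 (Set.Ioi 0)) (nhds (2 * B w (v - w) + 0 * B (v - w) (v - w))) :=
    (Continuous.tendsto (by fun_prop) 0).mono_left nhdsWithin_le_nhds
  have hderiv := le_of_tendsto hlimit
    (Filter.eventually_of_mem (Ioo_mem_nhdsGT one_pos) hsegment)
  rw [map_sub] at hderiv
  linarith

end FirstOrderCondition

section SqDistForm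

variable {ι P : Type*} [Fintype ι] [DecidableEq ι]

/-- The bilinear form `(v, w) ↦ ∑ᵢⱼ vᵢ wⱼ dist(xᵢ, xⱼ)²` of the Euclidean distance matrix of a
family of points; for weights `w` of total mass one, its value at `(w, w)` is twice the variance
of the family. -/
noncomputable def sqDistForm [PseudoMetricSpace P] (x : ι → P) : LinearMap.BilinForm ℝ (ι → ℝ) :=
  Matrix.toBilin' (Matrix.of fun i j ↦ dist (x i) (x j) ^ 2)

section PseudoMetricSpace

variable [PseudoMetricSpace P] (x : ι → P)

theorem sqDistForm_apply (v w : ι → ℝ) :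
    sqDistForm x v w = ∑ i, ∑ j, v i * dist (x i) (x j) ^ 2 * w j :=
  Matrix.toBilin'_apply _ v w

theorem sqDistForm_isSymm : (sqDistForm x).IsSymm :=
  Matrix.isSymm_toBilin'_iff_isSymm.2 <| Matrix.IsSymm.ext fun i j ↦ by
    simp only [Matrix.of_apply, dist_comm]

theorem sqDistForm_single_self (k : ι) :
    sqDistForm x (Pi.single k 1) (Pi.single k 1) = 0 := by
  simp [sqDistForm, Matrix.toBilin'_single]

theorem exists_isMaxOn_sqDistForm [Nonempty ι] :
    ∃ w ∈ stdSimplex ℝ ι, IsMaxOn (fun v ↦ sqDistForm x v v) (stdSimplex ℝ ι) w :=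
  (isCompact_stdSimplex ℝ ι).exists_isMaxOn
    ⟨_, single_mem_stdSimplex ℝ (Classical.arbitrary ι)⟩
    (by simp only [sqDistForm_apply]; fun_prop)

variable {x}

theorem sqDistForm_self_le {D : ℝ} (hD : ∀ i j, dist (x i) (x j) ≤ D) {w : ι → ℝ}
    (hw : w ∈ stdSimplex ℝ ι) : sqDistForm x w w ≤ D ^ 2 * (1 - ∑ i, w i ^ 2) := by
  have hrow (i : ι) : ∑ j, dist (x i) (x j) ^ 2 * w j ≤ D ^ 2 * (1 - w i) :=
    calc ∑ j, dist (x i) (x j) ^ 2 * w j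
        = ∑ j ∈ univ.erase i, dist (x i) (x j) ^ 2 * w j := by
          rw [sum_erase]; simp
      _ ≤ ∑ j ∈ univ.erase i, D ^ 2 * w j := by
          gcongr with j
          · exact hw.1 j
          · exact hD i j
      _ = D ^ 2 * (1 - w i) := by
          rw [← mul_sum, sum_erase_eq_sub (mem_univ i), hw.2]
  calc sqDistForm x w w
      = ∑ i, w i * ∑ j, dist (x i) (x j) ^ 2 * w j := by
        simp only [sqDistForm_apply, mul_assoc, mul_sum]
    _ ≤ ∑ i, w i * (D ^ 2 * (1 - w i)) := by
        gcongr with i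
        · exact hw.1 i
        · exact hrow i
    _ = D ^ 2 * (∑ i, w i - ∑ i, w i ^ 2) := by
        rw [← sum_sub_distrib, mul_sum]
        exact sum_congr rfl fun i _ ↦ by ring
    _ = D ^ 2 * (1 - ∑ i, w i ^ 2) := by rw [hw.2]

end PseudoMetricSpace

variable {V : Type*} [NormedAddCommGroup V] [InnerProductSpace ℝ V] [MetricSpace P]
  [NormedAddTorsor V P] (x : ι → P)

theorem dist_affineCombination_sq_eq_sqDistForm {w : ι → ℝ} (hw : ∑ i, w i = 1) (k : ι) :
    dist (x k) (univ.affineCombination ℝ x w) ^ 2 =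
      sqDistForm x w (Pi.single k 1) - sqDistForm x w w / 2 := by
  have hdist : dist (x k) (univ.affineCombination ℝ x w) ^ 2 =
      -sqDistForm x (w - Pi.single k 1) (w - Pi.single k 1) / 2 := by
    have h := EuclideanGeometry.dist_affineCombination x hw
      (Fintype.sum_pi_single' k (1 : ℝ))
    rw [univ.affineCombination_piSingle ℝ x (mem_univ k)] at h
    rw [dist_comm, sq, h, sqDistForm_apply]
    simp only [sq, mul_right_comm]
  rw [hdist, map_sub, map_sub, LinearMap.sub_apply, LinearMap.sub_apply,
    (sqDistForm_isSymm x).eq (Pi.single k 1) w, sqDistForm_single_self]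
  ring

theorem exists_weights_dist_sq_le_sqDistForm [Nonempty ι] :
    ∃ w ∈ stdSimplex ℝ ι, ∀ k,
      dist (x k) (univ.affineCombination ℝ x w) ^ 2 ≤ sqDistForm x w w / 2 := by
  obtain ⟨w, hw, hmax⟩ := exists_isMaxOn_sqDistForm x
  refine ⟨w, hw, fun k ↦ ?_⟩
  have hfirst : sqDistForm x w (Pi.single k 1) ≤ sqDistForm x w w :=
    bilinForm_apply_le_apply_self_of_isMaxOn (sqDistForm_isSymm x) (convex_stdSimplex ℝ ι)
      (single_mem_stdSimplex ℝ k) hw hmax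
  rw [dist_affineCombination_sq_eq_sqDistForm x hw.2]
  linarith

end SqDistForm

section Jung

variable {ι : Type*} [Fintype ι]

theorem one_div_card_le_sum_sq {w : ι → ℝ} (hw : ∑ i, w i = 1) :
    1 / (Fintype.card ι : ℝ) ≤ ∑ i, w i ^ 2 := by
  have hcs := sq_sum_le_card_mul_sum_sq (s := univ) (f := w)
  rw [hw, one_pow, card_univ, mul_comm] at hcs
  exact div_le_of_le_mul₀ (Nat.cast_nonneg _) (sum_nonneg fun i _ ↦ sq_nonneg (w i)) hcs

theorem exists_forall_dist_le_of_card_le {V P : Type*} [NormedAddCommGroup V]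
    [InnerProductSpace ℝ V] [MetricSpace P] [NormedAddTorsor V P] {x : ι → P} {D : ℝ}
    (hD : ∀ i j, dist (x i) (x j) ≤ D) {n : ℕ} (hn : Fintype.card ι ≤ n + 1) :
    ∃ c, ∀ i, dist (x i) c ≤ D * √(n / (2 * (n + 1))) := by
  classical
  cases isEmpty_or_nonempty ι with
  | inl => exact ⟨Classical.arbitrary P, isEmptyElim⟩
  | inr hι =>
    have hD₀ : 0 ≤ D := dist_nonneg.trans (hD hι.some hι.some)
    obtain ⟨w, hw, hdist⟩ := exists_weights_dist_sq_le_sqDistForm x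
    refine ⟨univ.affineCombination ℝ x w, fun k ↦ le_of_sq_le_sq ?_ (by positivity)⟩
    have hsq : 1 / ((n : ℝ) + 1) ≤ ∑ i, w i ^ 2 :=
      (one_div_le_one_div_of_le (Nat.cast_pos.2 Fintype.card_pos) (mod_cast hn)).trans
        (one_div_card_le_sum_sq hw.2)
    calc dist (x k) (univ.affineCombination ℝ x w) ^ 2
        ≤ sqDistForm x w w / 2 := hdist k
      _ ≤ D ^ 2 * (1 - ∑ i, w i ^ 2) / 2 := by gcongr; exact sqDistForm_self_le hD hw
      _ ≤ D ^ 2 * (1 - 1 / ((n : ℝ) + 1)) / 2 := by gcongr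
      _ = D ^ 2 * (n / (2 * (n + 1))) := by field_simp; ring
      _ = (D * √(n / (2 * (n + 1)))) ^ 2 := by rw [mul_pow, Real.sq_sqrt (by positivity)]

variable {E : Type*} [NormedAddCommGroup E] [InnerProductSpace ℝ E] [FiniteDimensional ℝ E]

theorem jung_theorem {s : Set E} {D : ℝ}
    (hD : ∀ x ∈ s, ∀ y ∈ s, dist x y ≤ D) :
    ∃ c, s ⊆ Metric.closedBall c (D * √(finrank ℝ E / (2 * (finrank ℝ E + 1)))) := by
  obtain ⟨c, hc⟩ := Convex.helly_theorem_compact' (𝕜 := ℝ)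
    (F := fun x : s ↦ Metric.closedBall (x : E) (D * √(finrank ℝ E / (2 * (finrank ℝ E + 1)))))
    (fun x ↦ convex_closedBall _ _) (fun x ↦ isCompact_closedBall _ _) fun I hI ↦ by
      obtain ⟨c, hc⟩ := exists_forall_dist_le_of_card_le (x := fun i : I ↦ (i : E))
        (fun i j ↦ hD _ i.1.2 _ j.1.2) (by simpa using hI)
      exact ⟨c, Set.mem_iInter₂.2 fun i hi ↦ Metric.mem_closedBall'.2 (hc ⟨i, hi⟩)⟩
  exact ⟨c, fun x hx ↦ Metric.mem_closedBall_comm.1 (Set.mem_iInter.1 hc ⟨x, hx⟩)⟩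

theorem classical_vietoris_rips_lemma_general [Nontrivial E] {s : Set E} {t t' : ℝ}
    (ht'₀ : 0 ≤ t') (ht' : t' ≤ t * (√(2 * finrank ℝ E / (finrank ℝ E + 1)))⁻¹)
    (hs : s.Pairwise fun x y ↦ ‖x - y‖ ≤ 2 * t') :
    (⋂ x ∈ s, Metric.closedBall x t).Nonempty := by
  set n : ℝ := (finrank ℝ E : ℝ)
  have hn₀ : 0 < n := Nat.cast_pos.2 finrank_pos
  have hdist : ∀ x ∈ s, ∀ y ∈ s, dist x y ≤ 2 * t' := fun x hx y hy ↦ by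
    obtain rfl | hxy := eq_or_ne x y
    · simpa using ht'₀
    · exact dist_eq_norm x y ▸ hs hx hy hxy
  obtain ⟨c, hc⟩ := jung_theorem hdist
  have hradius : 2 * t' * √(n / (2 * (n + 1))) ≤ t :=
    calc 2 * t' * √(n / (2 * (n + 1)))
        = t' * (√(2 ^ 2) * √(n / (2 * (n + 1)))) := by
          rw [Real.sqrt_sq zero_le_two]; ring
      _ = t' * √(2 * n / (n + 1)) := by
          rw [← Real.sqrt_mul (by positivity)]; congr 2; field_simp
      _ ≤ t := by rwa [← le_div_iff₀ (by positivity), div_eq_mul_inv]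
  exact ⟨c, Set.mem_iInter₂.2 fun x hx ↦
    Metric.mem_closedBall_comm.1 (Metric.closedBall_subset_closedBall hradius (hc hx))⟩

end Jung

/-- Classical Vietoris-Rips Lemma: if a finite set `σ` of points of `ℝ^d` has diameter
at most `2t'`, where `0 < t' ≤ t·(√(2d/(d+1)))⁻¹`, then the closed balls of radius `t`
centered at the points of `σ` have a common point. -/
theorem classical_vietoris_rips_lemma {d : ℕ} (hd : 1 ≤ d)
    (σ : Finset (EuclideanSpace ℝ (Fin d))) (hσ : σ.Nonempty)
    (t t' : ℝ) (ht : 0 < t) (ht'pos : 0 < t')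
    (ht' : t' ≤ t * (Real.sqrt (2 * d / (d + 1)))⁻¹)
    (hVR : ∀ x ∈ σ, ∀ y ∈ σ, x ≠ y → ‖x - y‖ ≤ 2 * t') :
    (⋂ x ∈ σ, Metric.closedBall x t).Nonempty := by
  have : Nontrivial (EuclideanSpace ℝ (Fin d)) :=
    nontrivial_of_finrank_pos (R := ℝ) (by rwa [finrank_euclideanSpace_fin])
  exact classical_vietoris_rips_lemma_general (s := σ) ht'pos.le
    (by rwa [finrank_euclideanSpace_fin]) fun x hx y hy ↦ hVR x hx y hy
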